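/- arXiv:1501.02360 — 4 statements merged into one kernel-verified Lean document; each statement's English description precedes it below -/
import Mathlib

section
/- Let (H, A, C) be a Doi Hom-Hopf datum and (N, ν) a right (A,β)-Hom-module. Then N⊗C, equipped with the invertible map ν⊗γ, the right A-action (n⊗c)·a = n·a₀ ⊗ c·a₁ and the right C-coaction ρ(n⊗c) = (ν⁻¹(n)⊗c₁) ⊗ γ(c₂), is a Doi Hom-Hopf module over (H, A, C); in particular it is a right (A,β)-Hom-module, a right (C,γ)-Hom-comodule, and satisfies the compatibility condition ρ((n⊗c)·a) = (n⊗c)₀·a₀ ⊗ (n⊗c)₁·a₁. -/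
open TensorProduct

namespace DoiHomHopf

/-- A monoidal Hom-algebra `(A, β)`. -/
structure HomAlg (k : Type*) [CommRing k] (A : Type*) [AddCommGroup A] [Module k A] where
  str : A ≃ₗ[k] A
  mul : A →ₗ[k] A →ₗ[k] A
  one : A
  str_mul : ∀ a b, str (mul a b) = mul (str a) (str b)
  str_one : str one = one
  hom_assoc : ∀ a b c, mul (str a) (mul b c) = mul (mul a b) (str c)
  mul_one : ∀ a, mul a one = str a
  one_mul : ∀ a, mul one a = str a

/-- A monoidal Hom-coalgebra `(C, γ)`. -/
structure HomCoalg (k : Type*) [CommRing k] (C : Type*) [AddCommGroup C] [Module k C] where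
  str : C ≃ₗ[k] C
  comul : C →ₗ[k] C ⊗[k] C
  counit : C →ₗ[k] k
  comul_str : ∀ c, comul (str c) = TensorProduct.map str.toLinearMap str.toLinearMap (comul c)
  counit_str : ∀ c, counit (str c) = counit c
  hom_coassoc : ∀ c,
    TensorProduct.map str.symm.toLinearMap comul (comul c) =
      TensorProduct.assoc k C C C (TensorProduct.map comul str.symm.toLinearMap (comul c))
  counit_comul_left : ∀ c,
    TensorProduct.lid k C (TensorProduct.map counit LinearMap.id (comul c)) = str.symm c
  counit_comul_right : ∀ c,
    TensorProduct.rid k C (TensorProduct.map LinearMap.id counit (comul c)) = str.symm c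

/-- A monoidal Hom-bialgebra. -/
structure HomBialg (k : Type*) [CommRing k] (H : Type*) [AddCommGroup H] [Module k H]
    extends HomAlg k H, HomCoalg k H where
  comul_mul : ∀ a b, comul (mul a b) = TensorProduct.map₂ mul mul (comul a) (comul b)
  comul_one : comul one = one ⊗ₜ[k] one
  counit_mul : ∀ a b, counit (mul a b) = counit a * counit b
  counit_one : counit one = 1

/-- A monoidal Hom-Hopf algebra `(H, α)` with antipode `S`. -/
structure HomHopf (k : Type*) [CommRing k] (H : Type*) [AddCommGroup H] [Module k H]
    extends HomBialg k H where
  S : H →ₗ[k] H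
  S_mul_comul : ∀ h,
    TensorProduct.lift mul (TensorProduct.map S LinearMap.id (comul h)) = counit h • one
  mul_S_comul : ∀ h,
    TensorProduct.lift mul (TensorProduct.map LinearMap.id S (comul h)) = counit h • one
  S_str : ∀ h, S (str h) = str (S h)

/-- A right `(A, β)`-Hom-module `(M, μ)`. -/
structure HomMod {k : Type*} [CommRing k] {A : Type*} [AddCommGroup A] [Module k A]
    (hA : HomAlg k A) (M : Type*) [AddCommGroup M] [Module k M] where
  str : M ≃ₗ[k] M
  act : M →ₗ[k] A →ₗ[k] M
  act_act : ∀ m a b, act (act m a) (hA.str b) = act (str m) (hA.mul a b)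
  act_one : ∀ m, act m hA.one = str m
  str_act : ∀ m a, str (act m a) = act (str m) (hA.str a)

/-- A right `(C, γ)`-Hom-comodule `(M, μ)`. -/
structure HomComod {k : Type*} [CommRing k] {C : Type*} [AddCommGroup C] [Module k C]
    (hC : HomCoalg k C) (M : Type*) [AddCommGroup M] [Module k M] where
  str : M ≃ₗ[k] M
  coact : M →ₗ[k] M ⊗[k] C
  hom_coassoc : ∀ m,
    TensorProduct.assoc k M C C
        (TensorProduct.map coact hC.str.symm.toLinearMap (coact m)) =
      TensorProduct.map str.symm.toLinearMap hC.comul (coact m)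
  counit_coact : ∀ m,
    TensorProduct.rid k M (TensorProduct.map LinearMap.id hC.counit (coact m)) = str.symm m
  coact_str : ∀ m, coact (str m) = TensorProduct.map str.toLinearMap hC.str.toLinearMap (coact m)

/-- A right `(H, α)`-Hom-comodule algebra `(A, β)`. -/
structure HomComodAlg {k : Type*} [CommRing k] {H : Type*} [AddCommGroup H] [Module k H]
    (hH : HomBialg k H) (A : Type*) [AddCommGroup A] [Module k A] extends HomAlg k A where
  coact : A →ₗ[k] A ⊗[k] H
  hom_coassoc : ∀ a,
    TensorProduct.assoc k A H H
        (TensorProduct.map coact hH.str.symm.toLinearMap (coact a)) =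
      TensorProduct.map str.symm.toLinearMap hH.comul (coact a)
  counit_coact : ∀ a,
    TensorProduct.rid k A (TensorProduct.map LinearMap.id hH.counit (coact a)) = str.symm a
  coact_str : ∀ a, coact (str a) = TensorProduct.map str.toLinearMap hH.str.toLinearMap (coact a)
  coact_mul : ∀ a b, coact (mul a b) = TensorProduct.map₂ mul hH.mul (coact a) (coact b)
  coact_one : coact one = one ⊗ₜ[k] hH.one

/-- A right `(H, α)`-Hom-module coalgebra `(C, γ)`. -/
structure HomModCoalg {k : Type*} [CommRing k] {H : Type*} [AddCommGroup H] [Module k H]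
    (hH : HomBialg k H) (C : Type*) [AddCommGroup C] [Module k C] extends HomCoalg k C where
  act : C →ₗ[k] H →ₗ[k] C
  act_act : ∀ c h g, act (act c h) (hH.str g) = act (str c) (hH.mul h g)
  act_one : ∀ c, act c hH.one = str c
  str_act : ∀ c h, str (act c h) = act (str c) (hH.str h)
  comul_act : ∀ c h, comul (act c h) = TensorProduct.map₂ act act (comul c) (hH.comul h)
  counit_act : ∀ c h, counit (act c h) = counit c * hH.counit h

/-- A Doi Hom-Hopf module `(M, μ)` over the Doi Hom-Hopf datum `(H, A, C)`. -/
structure DoiMod {k : Type*} [CommRing k] {H A C : Type*}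
    [AddCommGroup H] [Module k H] [AddCommGroup A] [Module k A] [AddCommGroup C] [Module k C]
    {hH : HomBialg k H} (hA : HomComodAlg hH A) (hC : HomModCoalg hH C)
    (M : Type*) [AddCommGroup M] [Module k M] where
  str : M ≃ₗ[k] M
  act : M →ₗ[k] A →ₗ[k] M
  coact : M →ₗ[k] M ⊗[k] C
  act_act : ∀ m a b, act (act m a) (hA.str b) = act (str m) (hA.mul a b)
  act_one : ∀ m, act m hA.one = str m
  str_act : ∀ m a, str (act m a) = act (str m) (hA.str a)
  hom_coassoc : ∀ m,
    TensorProduct.assoc k M C C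
        (TensorProduct.map coact hC.str.symm.toLinearMap (coact m)) =
      TensorProduct.map str.symm.toLinearMap hC.comul (coact m)
  counit_coact : ∀ m,
    TensorProduct.rid k M (TensorProduct.map LinearMap.id hC.counit (coact m)) = str.symm m
  coact_str : ∀ m, coact (str m) = TensorProduct.map str.toLinearMap hC.str.toLinearMap (coact m)
  compat : ∀ m a,
    coact (act m a) = TensorProduct.map₂ act hC.act (coact m) (hA.coact a)

/-- `f` is a morphism of Doi Hom-Hopf modules. -/
structure IsDoiHom {k : Type*} [CommRing k] {H A C : Type*}
    [AddCommGroup H] [Module k H] [AddCommGroup A] [Module k A] [AddCommGroup C] [Module k C]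
    {hH : HomBialg k H} {hA : HomComodAlg hH A} {hC : HomModCoalg hH C}
    {M N : Type*} [AddCommGroup M] [Module k M] [AddCommGroup N] [Module k N]
    (dM : DoiMod hA hC M) (dN : DoiMod hA hC N) (f : M →ₗ[k] N) : Prop where
  str_comm : ∀ m, f (dM.str m) = dN.str (f m)
  act_comm : ∀ m a, f (dM.act m a) = dN.act (f m) a
  coact_comm : ∀ m, dN.coact (f m) = TensorProduct.map f LinearMap.id (dM.coact m)

/-- A normalized `(A, β)`-integral `θ : C ⊗ C → A` for the Doi Hom-Hopf datum `(H, A, C)`. -/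
structure NIntegral {k : Type*} [CommRing k] {H A C : Type*}
    [AddCommGroup H] [Module k H] [AddCommGroup A] [Module k A] [AddCommGroup C] [Module k C]
    {hH : HomBialg k H} (hA : HomComodAlg hH A) (hC : HomModCoalg hH C) where
  θ : C ⊗[k] C →ₗ[k] A
  θ_str : ∀ c d, θ (hC.str c ⊗ₜ[k] hC.str d) = hA.str (θ (c ⊗ₜ[k] d))
  cond1 : ∀ c d : C,
    TensorProduct.map (TensorProduct.curry θ (hC.str.symm d)) hC.str.toLinearMap (hC.comul c) =
      TensorProduct.map hA.str.toLinearMap (TensorProduct.lift hC.act)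
        ((TensorProduct.assoc k A C H)
          (TensorProduct.map (TensorProduct.comm k C A).toLinearMap LinearMap.id
            ((TensorProduct.assoc k C A H).symm
              (TensorProduct.map LinearMap.id
                (hA.coact ∘ₗ (TensorProduct.curry θ).flip (hC.str.symm c)) (hC.comul d)))))
  cond2 : ∀ c, θ (hC.comul c) = hC.counit c • hA.one
  cond3 : ∀ (a : A) (c d : C),
    TensorProduct.lift hA.mul
      (TensorProduct.map LinearMap.id θ
        ((TensorProduct.assoc k A C C)
          (TensorProduct.map
            (TensorProduct.map (hA.str.toLinearMap ∘ₗ hA.str.toLinearMap)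
              (hC.act (hC.str.symm d)))
            (hC.act (hC.str.symm c))
            (TensorProduct.map hA.coact hH.str.symm.toLinearMap (hA.coact a))))) =
      hA.mul (θ (d ⊗ₜ[k] c)) a

/-- The right `A`-action on `M ⊗ C` given by `(m ⊗ c) · a = m · a₀ ⊗ c · a₁`. -/
noncomputable def Gact {k : Type*} [CommRing k] {H A C : Type*}
    [AddCommGroup H] [Module k H] [AddCommGroup A] [Module k A] [AddCommGroup C] [Module k C]
    {hH : HomBialg k H} (hA : HomComodAlg hH A) (hC : HomModCoalg hH C)
    {M : Type*} [AddCommGroup M] [Module k M] (act : M →ₗ[k] A →ₗ[k] M) :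
    (M ⊗[k] C) →ₗ[k] A →ₗ[k] (M ⊗[k] C) :=
  (TensorProduct.map₂ act hC.act).compl₂ hA.coact

/-- The right `C`-coaction on `M ⊗ C` given by `ρ(m ⊗ c) = (μ⁻¹(m) ⊗ c₁) ⊗ γ(c₂)`. -/
noncomputable def Gcoact {k : Type*} [CommRing k] {C : Type*} [AddCommGroup C] [Module k C]
    (hC : HomCoalg k C) {M : Type*} [AddCommGroup M] [Module k M] (str : M ≃ₗ[k] M) :
    (M ⊗[k] C) →ₗ[k] (M ⊗[k] C) ⊗[k] C :=
  (TensorProduct.assoc k M C C).symm.toLinearMap ∘ₗ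
    TensorProduct.map str.symm.toLinearMap
      (TensorProduct.map LinearMap.id hC.str.toLinearMap ∘ₗ hC.comul)

/-- The counit of the adjunction: `δ_N(n ⊗ c) = ε(c) ν(n)`. -/
noncomputable def deltaMap {k : Type*} [CommRing k] {C : Type*} [AddCommGroup C] [Module k C]
    (hC : HomCoalg k C) {N : Type*} [AddCommGroup N] [Module k N] (str : N ≃ₗ[k] N) :
    (N ⊗[k] C) →ₗ[k] N :=
  str.toLinearMap ∘ₗ (TensorProduct.rid k N).toLinearMap ∘ₗ
    TensorProduct.map LinearMap.id hC.counit

/-- The map `ν_M : M ⊗ C → M`, `ν_M(m ⊗ c) = μ(m₀) · θ(m₁ ⊗ γ⁻¹(c))`. -/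
noncomputable def nuMap {k : Type*} [CommRing k] {H A C : Type*}
    [AddCommGroup H] [Module k H] [AddCommGroup A] [Module k A] [AddCommGroup C] [Module k C]
    {hH : HomBialg k H} {hA : HomComodAlg hH A} {hC : HomModCoalg hH C}
    {M : Type*} [AddCommGroup M] [Module k M]
    (θ : C ⊗[k] C →ₗ[k] A) (d : DoiMod hA hC M) : (M ⊗[k] C) →ₗ[k] M :=
  TensorProduct.lift d.act ∘ₗ TensorProduct.map d.str.toLinearMap θ ∘ₗ
    (TensorProduct.assoc k M C C).toLinearMap ∘ₗ
    TensorProduct.map d.coact hC.str.symm.toLinearMap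

end DoiHomHopf

open DoiHomHopf

/-!
Each half of the structure on `N ⊗ C` is assembled from general constructions. The tensor product
of two Hom-modules is a Hom-module over the tensor product of the Hom-algebras, and the coaction
`A → A ⊗ H` is a morphism of Hom-algebras, along which the `A ⊗ H`-module `N ⊗ C` is restricted.
For the comodule half, a Hom-comodule coaction `ρ` may be replaced by `(id ⊗ γ) ρ`, and tensoring
a Hom-comodule on the left with `(N, ν)` gives a Hom-comodule; apply both to `Δ : C → C ⊗ C`.
Compatibility follows from the form `a₀₀ ⊗ a₀₁ ⊗ a₁ = β⁻¹(a₀) ⊗ a₁₁ ⊗ α(a₁₂)` of the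
Hom-coassociativity of `A`.
-/

namespace DoiHomHopf

section TensorIdentities

variable {k : Type*} [CommRing k]
  {M₁ M₂ M₁' M₂' N₁ N₂ N₁' N₂' : Type*}
  [AddCommGroup M₁] [Module k M₁] [AddCommGroup M₂] [Module k M₂]
  [AddCommGroup M₁'] [Module k M₁'] [AddCommGroup M₂'] [Module k M₂']
  [AddCommGroup N₁] [Module k N₁] [AddCommGroup N₂] [Module k N₂]
  [AddCommGroup N₁'] [Module k N₁'] [AddCommGroup N₂'] [Module k N₂']
  {P₁ P₂ Q₁ Q₂ : Type*}
  [AddCommGroup P₁] [Module k P₁] [AddCommGroup P₂] [Module k P₂]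
  [AddCommGroup Q₁] [Module k Q₁] [AddCommGroup Q₂] [Module k Q₂]

theorem map_map₂_eq_map₂_map
    {f : M₁ →ₗ[k] N₁ →ₗ[k] P₁} {g : M₂ →ₗ[k] N₂ →ₗ[k] P₂}
    {f' : M₁' →ₗ[k] N₁' →ₗ[k] Q₁} {g' : M₂' →ₗ[k] N₂' →ₗ[k] Q₂}
    {p : P₁ →ₗ[k] Q₁} {q : P₂ →ₗ[k] Q₂}
    {a : M₁ →ₗ[k] M₁'} {b : N₁ →ₗ[k] N₁'} {c : M₂ →ₗ[k] M₂'} {d : N₂ →ₗ[k] N₂'}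
    (hf : ∀ x y, p (f x y) = f' (a x) (b y)) (hg : ∀ x y, q (g x y) = g' (c x) (d y))
    (s : M₁ ⊗[k] M₂) (t : N₁ ⊗[k] N₂) :
    TensorProduct.map p q (TensorProduct.map₂ f g s t) =
      TensorProduct.map₂ f' g' (TensorProduct.map a c s) (TensorProduct.map b d t) := by
  have h : (TensorProduct.map₂ f g).compr₂ (TensorProduct.map p q) =
      (TensorProduct.map₂ f' g').compl₁₂ (TensorProduct.map a c) (TensorProduct.map b d) := by
    ext
    simp [hf, hg]
  exact LinearMap.congr_fun₂ h s t

theorem map₂_map₂_map_eq_map₂_map_map₂ {L₁ L₂ L₁' L₂' R₁ R₂ : Type*}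
    [AddCommGroup L₁] [Module k L₁] [AddCommGroup L₂] [Module k L₂]
    [AddCommGroup L₁'] [Module k L₁'] [AddCommGroup L₂'] [Module k L₂']
    [AddCommGroup R₁] [Module k R₁] [AddCommGroup R₂] [Module k R₂]
    {f : L₁ →ₗ[k] M₁ →ₗ[k] P₁} {g : L₂ →ₗ[k] M₂ →ₗ[k] P₂}
    {f' : P₁ →ₗ[k] N₁' →ₗ[k] R₁} {g' : P₂ →ₗ[k] N₂' →ₗ[k] R₂}
    {u : M₁ →ₗ[k] N₁ →ₗ[k] Q₁} {v : M₂ →ₗ[k] N₂ →ₗ[k] Q₂}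
    {u' : L₁' →ₗ[k] Q₁ →ₗ[k] R₁} {v' : L₂' →ₗ[k] Q₂ →ₗ[k] R₂}
    {a : L₁ →ₗ[k] L₁'} {b : N₁ →ₗ[k] N₁'} {c : L₂ →ₗ[k] L₂'} {d : N₂ →ₗ[k] N₂'}
    (hf : ∀ x y z, f' (f x y) (b z) = u' (a x) (u y z))
    (hg : ∀ x y z, g' (g x y) (d z) = v' (c x) (v y z))
    (r : L₁ ⊗[k] L₂) (s : M₁ ⊗[k] M₂) (t : N₁ ⊗[k] N₂) :
    TensorProduct.map₂ f' g' (TensorProduct.map₂ f g r s) (TensorProduct.map b d t) =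
      TensorProduct.map₂ u' v' (TensorProduct.map a c r) (TensorProduct.map₂ u v s t) := by
  induction r with
  | zero => simp
  | add r₁ r₂ h₁ h₂ => simp only [map_add, LinearMap.add_apply, h₁, h₂]
  | tmul x₁ x₂ =>
    have h : (TensorProduct.map₂ f' g').compl₁₂
          (TensorProduct.map₂ f g (x₁ ⊗ₜ x₂)) (TensorProduct.map b d) =
        (TensorProduct.map₂ u v).compr₂
          (TensorProduct.map₂ u' v' (TensorProduct.map a c (x₁ ⊗ₜ x₂))) := by
      ext
      simp [hf, hg]
    exact LinearMap.congr_fun₂ h s t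

theorem map₂_compl₂ (f : M₁ →ₗ[k] N₁ →ₗ[k] P₁) (g : M₂ →ₗ[k] N₂ →ₗ[k] P₂)
    (φ : N₁' →ₗ[k] N₁) (s : M₁ ⊗[k] M₂) (t : N₁' ⊗[k] N₂) :
    TensorProduct.map₂ (f.compl₂ φ) g s t =
      TensorProduct.map₂ f g s (TensorProduct.map φ LinearMap.id t) := by
  have h : TensorProduct.map₂ (f.compl₂ φ) g =
      (TensorProduct.map₂ f g).compl₂ (TensorProduct.map φ LinearMap.id) := by
    ext
    simp
  rw [h, LinearMap.compl₂_apply]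

theorem map₂_map₂_assoc_symm {M₃ N₃ P₃ : Type*}
    [AddCommGroup M₃] [Module k M₃] [AddCommGroup N₃] [Module k N₃] [AddCommGroup P₃] [Module k P₃]
    (f₁ : M₁ →ₗ[k] N₁ →ₗ[k] P₁) (f₂ : M₂ →ₗ[k] N₂ →ₗ[k] P₂) (f₃ : M₃ →ₗ[k] N₃ →ₗ[k] P₃)
    (s : M₁ ⊗[k] (M₂ ⊗[k] M₃)) (t : (N₁ ⊗[k] N₂) ⊗[k] N₃) :
    TensorProduct.map₂ (TensorProduct.map₂ f₁ f₂) f₃ ((TensorProduct.assoc k M₁ M₂ M₃).symm s) t =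
      (TensorProduct.assoc k P₁ P₂ P₃).symm
        (TensorProduct.map₂ f₁ (TensorProduct.map₂ f₂ f₃) s
          (TensorProduct.assoc k N₁ N₂ N₃ t)) := by
  have h : (TensorProduct.map₂ (TensorProduct.map₂ f₁ f₂) f₃).comp
        (TensorProduct.assoc k M₁ M₂ M₃).symm.toLinearMap =
      ((TensorProduct.map₂ f₁ (TensorProduct.map₂ f₂ f₃)).compl₂
        (TensorProduct.assoc k N₁ N₂ N₃).toLinearMap).compr₂
          (TensorProduct.assoc k P₁ P₂ P₃).symm.toLinearMap := by
    ext
    simp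
  exact LinearMap.congr_fun₂ h s t

theorem assoc_map_assoc_symm_assoc_symm (x : M₁ ⊗[k] ((M₂ ⊗[k] N₁) ⊗[k] N₂)) :
    TensorProduct.assoc k (M₁ ⊗[k] M₂) N₁ N₂
        (TensorProduct.map (TensorProduct.assoc k M₁ M₂ N₁).symm.toLinearMap LinearMap.id
          ((TensorProduct.assoc k M₁ (M₂ ⊗[k] N₁) N₂).symm x)) =
      (TensorProduct.assoc k M₁ M₂ (N₁ ⊗[k] N₂)).symm
        (TensorProduct.map LinearMap.id (TensorProduct.assoc k M₂ N₁ N₂).toLinearMap x) := by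
  have h : (TensorProduct.assoc k (M₁ ⊗[k] M₂) N₁ N₂).toLinearMap ∘ₗ
        TensorProduct.map (TensorProduct.assoc k M₁ M₂ N₁).symm.toLinearMap LinearMap.id ∘ₗ
          (TensorProduct.assoc k M₁ (M₂ ⊗[k] N₁) N₂).symm.toLinearMap =
      (TensorProduct.assoc k M₁ M₂ (N₁ ⊗[k] N₂)).symm.toLinearMap ∘ₗ
        TensorProduct.map LinearMap.id (TensorProduct.assoc k M₂ N₁ N₂).toLinearMap := by
    ext
    simp
  exact LinearMap.congr_fun h x

theorem assoc_map_comp_assoc_symm (f : M₁ →ₗ[k] M₁') (g : M₂ →ₗ[k] M₂' ⊗[k] N₁)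
    (h : N₂ →ₗ[k] N₂') (x : M₁ ⊗[k] (M₂ ⊗[k] N₂)) :
    TensorProduct.assoc k (M₁' ⊗[k] M₂') N₁ N₂'
        (TensorProduct.map ((TensorProduct.assoc k M₁' M₂' N₁).symm.toLinearMap ∘ₗ
          TensorProduct.map f g) h ((TensorProduct.assoc k M₁ M₂ N₂).symm x)) =
      (TensorProduct.assoc k M₁' M₂' (N₁ ⊗[k] N₂')).symm
        (TensorProduct.map f
          ((TensorProduct.assoc k M₂' N₁ N₂').toLinearMap ∘ₗ TensorProduct.map g h) x) := by
  rw [← LinearMap.id_comp h, ← TensorProduct.map_map, TensorProduct.map_map_assoc_symm,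
    assoc_map_assoc_symm_assoc_symm, TensorProduct.map_map, LinearMap.id_comp, LinearMap.id_comp]

theorem rid_map_assoc_symm (f : N₁ →ₗ[k] k) (x : M₁ ⊗[k] (M₂ ⊗[k] N₁)) :
    TensorProduct.rid k (M₁ ⊗[k] M₂)
        (TensorProduct.map LinearMap.id f ((TensorProduct.assoc k M₁ M₂ N₁).symm x)) =
      TensorProduct.map LinearMap.id
        ((TensorProduct.rid k M₂).toLinearMap ∘ₗ TensorProduct.map LinearMap.id f) x := by
  have h : (TensorProduct.rid k (M₁ ⊗[k] M₂)).toLinearMap ∘ₗ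
        TensorProduct.map LinearMap.id f ∘ₗ (TensorProduct.assoc k M₁ M₂ N₁).symm.toLinearMap =
      TensorProduct.map LinearMap.id
        ((TensorProduct.rid k M₂).toLinearMap ∘ₗ TensorProduct.map LinearMap.id f) := by
    ext
    simp
  exact LinearMap.congr_fun h x

end TensorIdentities

section Module

variable {k : Type*} [CommRing k] {A B M P : Type*}
  [AddCommGroup A] [Module k A] [AddCommGroup B] [Module k B]
  [AddCommGroup M] [Module k M] [AddCommGroup P] [Module k P]

/-- The tensor product of two monoidal Hom-algebras, with componentwise multiplication. -/
noncomputable def HomAlg.tensor (hA : HomAlg k A) (hB : HomAlg k B) : HomAlg k (A ⊗[k] B) where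
  str := TensorProduct.congr hA.str hB.str
  mul := TensorProduct.map₂ hA.mul hB.mul
  one := hA.one ⊗ₜ hB.one
  str_mul := map_map₂_eq_map₂_map hA.str_mul hB.str_mul
  str_one := by simp [hA.str_one, hB.str_one]
  hom_assoc a b c := (map₂_map₂_map_eq_map₂_map_map₂ (fun a b c ↦ (hA.hom_assoc a b c).symm)
    (fun a b c ↦ (hB.hom_assoc a b c).symm) a b c).symm
  mul_one x := by
    have h : (TensorProduct.map₂ hA.mul hB.mul).flip (hA.one ⊗ₜ hB.one) =
        (TensorProduct.congr hA.str hB.str).toLinearMap := by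
      ext
      simp [hA.mul_one, hB.mul_one]
    exact LinearMap.congr_fun h x
  one_mul x := by
    have h : TensorProduct.map₂ hA.mul hB.mul (hA.one ⊗ₜ hB.one) =
        (TensorProduct.congr hA.str hB.str).toLinearMap := by
      ext
      simp [hA.one_mul, hB.one_mul]
    exact LinearMap.congr_fun h x

/-- `f` is a morphism of monoidal Hom-algebras. -/
structure IsHomAlgHom (hA : HomAlg k A) (hB : HomAlg k B) (f : A →ₗ[k] B) : Prop where
  map_str : ∀ a, f (hA.str a) = hB.str (f a)
  map_mul : ∀ a b, f (hA.mul a b) = hB.mul (f a) (f b)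
  map_one : f hA.one = hB.one

namespace HomMod

/-- The tensor product of an `A`-Hom-module and a `B`-Hom-module, as an `A ⊗ B`-Hom-module. -/
noncomputable def tensor {hA : HomAlg k A} {hB : HomAlg k B} (mM : HomMod hA M)
    (mP : HomMod hB P) : HomMod (hA.tensor hB) (M ⊗[k] P) where
  str := TensorProduct.congr mM.str mP.str
  act := TensorProduct.map₂ mM.act mP.act
  act_act := map₂_map₂_map_eq_map₂_map_map₂ mM.act_act mP.act_act
  act_one x := by
    have h : (TensorProduct.map₂ mM.act mP.act).flip (hA.one ⊗ₜ hB.one) =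
        (TensorProduct.congr mM.str mP.str).toLinearMap := by
      ext
      simp [mM.act_one, mP.act_one]
    exact LinearMap.congr_fun h x
  str_act := map_map₂_eq_map₂_map mM.str_act mP.str_act

/-- Restriction of a `B`-Hom-module along a morphism of Hom-algebras `A → B`. -/
def restrict {hA : HomAlg k A} {hB : HomAlg k B} (mM : HomMod hB M) {f : A →ₗ[k] B}
    (hf : IsHomAlgHom hA hB f) : HomMod hA M where
  str := mM.str
  act := mM.act.compl₂ f
  act_act m a b := by
    simp only [LinearMap.compl₂_apply, hf.map_str, hf.map_mul, mM.act_act]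
  act_one m := by simp only [LinearMap.compl₂_apply, hf.map_one, mM.act_one]
  str_act m a := by simp only [LinearMap.compl₂_apply, hf.map_str, mM.str_act]

theorem str_symm_act {hA : HomAlg k A} (mM : HomMod hA M) (m : M) (a : A) :
    mM.str.symm (mM.act m a) = mM.act (mM.str.symm m) (hA.str.symm a) := by
  simp [LinearEquiv.symm_apply_eq, mM.str_act]

end HomMod

end Module

section Comodule

variable {k : Type*} [CommRing k] {C M N : Type*} [AddCommGroup C] [Module k C]
  [AddCommGroup M] [Module k M] [AddCommGroup N] [Module k N] {hC : HomCoalg k C}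

/-- A monoidal Hom-coalgebra as a right Hom-comodule over itself, with coaction `Δ`. -/
def HomCoalg.regularComod (hC : HomCoalg k C) : HomComod hC C where
  str := hC.str
  coact := hC.comul
  hom_coassoc c := (hC.hom_coassoc c).symm
  counit_coact := hC.counit_comul_right
  coact_str := hC.comul_str

namespace HomComod

theorem assoc_map_coact_id_coact (cM : HomComod hC M) (m : M) :
    TensorProduct.assoc k M C C (TensorProduct.map cM.coact LinearMap.id (cM.coact m)) =
      TensorProduct.map cM.str.symm.toLinearMap
        (TensorProduct.map LinearMap.id hC.str.toLinearMap ∘ₗ hC.comul) (cM.coact m) := by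
  have h := congrArg (TensorProduct.map LinearMap.id
    (TensorProduct.map LinearMap.id hC.str.toLinearMap)) (cM.hom_coassoc m)
  simpa [TensorProduct.map_map_assoc, TensorProduct.map_map] using h

/-- The Hom-comodule with the coaction `ρ` of `M` replaced by `(id ⊗ γ) ρ`. -/
def twist (cM : HomComod hC M) : HomComod hC M where
  str := cM.str
  coact := TensorProduct.map LinearMap.id hC.str.toLinearMap ∘ₗ cM.coact
  hom_coassoc m := by
    have comul_comp_str : hC.comul ∘ₗ hC.str.toLinearMap =
        TensorProduct.map hC.str.toLinearMap hC.str.toLinearMap ∘ₗ hC.comul :=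
      LinearMap.ext hC.comul_str
    have h := congrArg (TensorProduct.map LinearMap.id
      (TensorProduct.map hC.str.toLinearMap LinearMap.id)) (cM.assoc_map_coact_id_coact m)
    simpa [TensorProduct.map_map_assoc, TensorProduct.map_map, comul_comp_str,
      ← LinearMap.comp_assoc, ← TensorProduct.map_comp] using h
  counit_coact m := by
    have counit_comp_str : hC.counit ∘ₗ hC.str.toLinearMap = hC.counit :=
      LinearMap.ext hC.counit_str
    rw [LinearMap.comp_apply, TensorProduct.map_map, counit_comp_str, LinearMap.id_comp,
      cM.counit_coact]
  coact_str m := by simp [cM.coact_str, TensorProduct.map_map]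

/-- The left tensor product `N ⊗ M` of a Hom-comodule `M` with a module `N` carrying an
automorphism `ν`; the coaction is `n ⊗ m ↦ (ν⁻¹(n) ⊗ m₀) ⊗ m₁`. -/
noncomputable def lTensor (cM : HomComod hC M) (ν : N ≃ₗ[k] N) : HomComod hC (N ⊗[k] M) where
  str := TensorProduct.congr ν cM.str
  coact := (TensorProduct.assoc k N M C).symm.toLinearMap ∘ₗ
    TensorProduct.map ν.symm.toLinearMap cM.coact
  hom_coassoc x := by
    have coassoc : (TensorProduct.assoc k M C C).toLinearMap ∘ₗ
          TensorProduct.map cM.coact hC.str.symm.toLinearMap ∘ₗ cM.coact =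
        TensorProduct.map cM.str.symm.toLinearMap hC.comul ∘ₗ cM.coact :=
      LinearMap.ext cM.hom_coassoc
    simp only [LinearMap.comp_apply, LinearEquiv.coe_coe, assoc_map_comp_assoc_symm,
      TensorProduct.congr_symm, TensorProduct.toLinearMap_congr,
      TensorProduct.map_map_assoc_symm, TensorProduct.map_map, LinearMap.comp_assoc, coassoc]
  counit_coact x := by
    have h : ((TensorProduct.rid k M).toLinearMap ∘ₗ TensorProduct.map LinearMap.id hC.counit) ∘ₗ
        cM.coact = cM.str.symm.toLinearMap := LinearMap.ext cM.counit_coact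
    simp only [LinearMap.comp_apply, LinearEquiv.coe_coe, rid_map_assoc_symm,
      TensorProduct.map_map, h]
    rfl
  coact_str x := by
    have coact_comp_str : cM.coact ∘ₗ cM.str.toLinearMap =
        TensorProduct.map cM.str.toLinearMap hC.str.toLinearMap ∘ₗ cM.coact :=
      LinearMap.ext cM.coact_str
    rw [← LinearEquiv.coe_coe (TensorProduct.congr ν cM.str), TensorProduct.toLinearMap_congr]
    simp [TensorProduct.map_map_assoc_symm, TensorProduct.map_map, coact_comp_str]

end HomComod

end Comodule

section DoiModule

variable {k : Type*} [CommRing k] {H A C N : Type*}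
  [AddCommGroup H] [Module k H] [AddCommGroup A] [Module k A]
  [AddCommGroup C] [Module k C] [AddCommGroup N] [Module k N]
  {hH : HomBialg k H}

/-- The right `H`-Hom-comodule underlying a Hom-comodule algebra. -/
def HomComodAlg.toHomComod (hA : HomComodAlg hH A) : HomComod hH.toHomCoalg A where
  str := hA.str
  coact := hA.coact
  hom_coassoc := hA.hom_coassoc
  counit_coact := hA.counit_coact
  coact_str := hA.coact_str

theorem HomComodAlg.isHomAlgHom_coact (hA : HomComodAlg hH A) :
    IsHomAlgHom hA.toHomAlg (hA.toHomAlg.tensor hH.toHomAlg) hA.coact where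
  map_str := hA.coact_str
  map_mul := hA.coact_mul
  map_one := hA.coact_one

/-- The right `H`-Hom-module underlying a Hom-module coalgebra. -/
def HomModCoalg.toHomMod (hC : HomModCoalg hH C) : HomMod hH.toHomAlg C where
  str := hC.str
  act := hC.act
  act_act := hC.act_act
  act_one := hC.act_one
  str_act := hC.str_act

theorem HomModCoalg.map_id_str_comul_act (hC : HomModCoalg hH C) (c : C) (h : H) :
    TensorProduct.map LinearMap.id hC.str.toLinearMap (hC.comul (hC.act c h)) =
      TensorProduct.map₂ hC.act hC.act
        (TensorProduct.map LinearMap.id hC.str.toLinearMap (hC.comul c))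
        (TensorProduct.map LinearMap.id hH.str.toLinearMap (hH.comul h)) := by
  rw [hC.comul_act]
  exact map_map₂_eq_map₂_map (fun _ _ ↦ rfl) hC.str_act _ _

theorem Gcoact_map₂_act (hA : HomComodAlg hH A) (hC : HomModCoalg hH C)
    (mN : HomMod hA.toHomAlg N) (x : N ⊗[k] C) (y : A ⊗[k] H) :
    Gcoact hC.toHomCoalg mN.str (TensorProduct.map₂ mN.act hC.act x y) =
      (TensorProduct.assoc k N C C).symm
        (TensorProduct.map₂ mN.act (TensorProduct.map₂ hC.act hC.act)
          (TensorProduct.map mN.str.symm.toLinearMap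
            (TensorProduct.map LinearMap.id hC.str.toLinearMap ∘ₗ hC.comul) x)
          (TensorProduct.map hA.str.symm.toLinearMap
            (TensorProduct.map LinearMap.id hH.str.toLinearMap ∘ₗ hH.comul) y)) :=
  congrArg (TensorProduct.assoc k N C C).symm
    (map_map₂_eq_map₂_map mN.str_symm_act hC.map_id_str_comul_act x y)

theorem Gcoact_Gact (hA : HomComodAlg hH A) (hC : HomModCoalg hH C)
    (mN : HomMod hA.toHomAlg N) (x : N ⊗[k] C) (a : A) :
    Gcoact hC.toHomCoalg mN.str (Gact hA hC mN.act x a) =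
      TensorProduct.map₂ (Gact hA hC mN.act) hC.act (Gcoact hC.toHomCoalg mN.str x)
        (hA.coact a) := by
  have coassoc : TensorProduct.map hA.str.symm.toLinearMap
        (TensorProduct.map LinearMap.id hH.str.toLinearMap ∘ₗ hH.comul) (hA.coact a) =
      TensorProduct.assoc k A H H (TensorProduct.map hA.coact LinearMap.id (hA.coact a)) :=
    (hA.toHomComod.assoc_map_coact_id_coact a).symm
  calc
    Gcoact hC.toHomCoalg mN.str (Gact hA hC mN.act x a) =
        (TensorProduct.assoc k N C C).symm
          (TensorProduct.map₂ mN.act (TensorProduct.map₂ hC.act hC.act)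
            (TensorProduct.map mN.str.symm.toLinearMap
              (TensorProduct.map LinearMap.id hC.str.toLinearMap ∘ₗ hC.comul) x)
            (TensorProduct.assoc k A H H
              (TensorProduct.map hA.coact LinearMap.id (hA.coact a)))) := by
      rw [← coassoc]
      exact Gcoact_map₂_act hA hC mN x (hA.coact a)
    _ = TensorProduct.map₂ (TensorProduct.map₂ mN.act hC.act) hC.act
          (Gcoact hC.toHomCoalg mN.str x)
          (TensorProduct.map hA.coact LinearMap.id (hA.coact a)) :=
      (map₂_map₂_assoc_symm ..).symm
    _ = TensorProduct.map₂ (Gact hA hC mN.act) hC.act (Gcoact hC.toHomCoalg mN.str x)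
          (hA.coact a) :=
      (map₂_compl₂ ..).symm

/-- The Doi Hom-Hopf module `N ⊗ C` induced by a right `A`-Hom-module `N`. -/
noncomputable def HomMod.inducedDoiMod {hA : HomComodAlg hH A} (mN : HomMod hA.toHomAlg N)
    (hC : HomModCoalg hH C) : DoiMod hA hC (N ⊗[k] C) :=
  let mNC := (mN.tensor hC.toHomMod).restrict hA.isHomAlgHom_coact
  let cNC := hC.regularComod.twist.lTensor mN.str
  { str := TensorProduct.congr mN.str hC.str
    act := Gact hA hC mN.act
    coact := Gcoact hC.toHomCoalg mN.str
    act_act := mNC.act_act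
    act_one := mNC.act_one
    str_act := mNC.str_act
    hom_coassoc := cNC.hom_coassoc
    counit_coact := cNC.counit_coact
    coact_str := cNC.coact_str
    compat := Gcoact_Gact hA hC mN }

end DoiModule

end DoiHomHopf

theorem tensor_with_C_isDoiModule_general {k : Type*} [CommRing k] {H A C N : Type*}
    [AddCommGroup H] [Module k H] [AddCommGroup A] [Module k A]
    [AddCommGroup C] [Module k C] [AddCommGroup N] [Module k N]
    {hH : HomBialg k H} (hA : HomComodAlg hH A) (hC : HomModCoalg hH C)
    (mN : HomMod hA.toHomAlg N) :
    ∃ d : DoiMod hA hC (N ⊗[k] C),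
      d.str = TensorProduct.congr mN.str hC.str ∧
      d.act = Gact hA hC mN.act ∧
      d.coact = Gcoact hC.toHomCoalg mN.str :=
  ⟨mN.inducedDoiMod hC, rfl, rfl, rfl⟩

/-- For a Doi Hom-Hopf datum `(H, A, C)` and a right `(A, β)`-Hom-module `(N, ν)`,
`N ⊗ C` with structure map `ν ⊗ γ`, action `(n ⊗ c) · a = n · a₀ ⊗ c · a₁` and coaction
`ρ(n ⊗ c) = (ν⁻¹(n) ⊗ c₁) ⊗ γ(c₂)` is a Doi Hom-Hopf module. -/
theorem tensor_with_C_isDoiModule {k : Type*} [CommRing k] {H A C N : Type*}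
    [AddCommGroup H] [Module k H] [AddCommGroup A] [Module k A]
    [AddCommGroup C] [Module k C] [AddCommGroup N] [Module k N]
    (hH : HomHopf k H) (hA : HomComodAlg hH.toHomBialg A) (hC : HomModCoalg hH.toHomBialg C)
    (mN : HomMod hA.toHomAlg N) :
    ∃ d : DoiMod hA hC (N ⊗[k] C),
      d.str = TensorProduct.congr mN.str hC.str ∧
      d.act = Gact hA hC mN.act ∧
      d.coact = Gcoact hC.toHomCoalg mN.str :=
  tensor_with_C_isDoiModule_general hA hC mN
end

section
/- Let (H, A, C) be a Doi Hom-Hopf datum, θ : C⊗C → A a normalized (A,β)-integral, and (M, μ) a Doi Hom-Hopf module. Define ν_M : M⊗C → M by ν_M(m⊗c) = μ(m₀)·θ(m₁⊗γ⁻¹(c)). Then ν_M(μ(m)⊗γ(c)) = μ(ν_M(m⊗c)) and ν_M is right A-linear for the action (m⊗c)·a = m·a₀ ⊗ c·a₁ on M⊗C; that is, ν_M((m⊗c)·a) = ν_M(m⊗c)·a for all m ∈ M, c ∈ C, a ∈ A. -/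
open TensorProduct

open DoiHomHopf

/-! Factor `ν_M` as `M ⊗ C → (M ⊗ C) ⊗ C → M`, where the first map is `ρ ⊗ γ⁻¹` and the second is
`(n ⊗ e) ⊗ c ↦ μ(n) · θ(e ⊗ c)`, and let `A` act on the middle term by
`((n ⊗ e) ⊗ c) · a = (n · a₀₀ ⊗ e · a₀₁) ⊗ c · α⁻¹(a₁)`. Both factors are then `A`-linear: the first
by the compatibility `ρ(m · a) = m₀ · a₀ ⊗ m₁ · a₁`, the second by (4.3) and Hom-associativity. -/

namespace DoiHomHopf

variable {k : Type*} [CommRing k] {H A C M : Type*}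
  [AddCommGroup H] [Module k H] [AddCommGroup A] [Module k A]
  [AddCommGroup C] [Module k C] [AddCommGroup M] [Module k M]
  {hH : HomBialg k H}

theorem HomModCoalg.str_symm_act (hC : HomModCoalg hH C) (c : C) (h : H) :
    hC.str.symm (hC.act c h) = hC.act (hC.str.symm c) (hH.str.symm h) := by
  rw [LinearEquiv.symm_apply_eq, hC.str_act, LinearEquiv.apply_symm_apply,
    LinearEquiv.apply_symm_apply]

/-- The iterated coaction `a ↦ (a₀₀ ⊗ a₀₁) ⊗ α⁻¹(a₁)`, in the bracketing of (4.3). -/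
noncomputable def HomComodAlg.coactTwice (hA : HomComodAlg hH A) : A →ₗ[k] (A ⊗[k] H) ⊗[k] H :=
  TensorProduct.map hA.coact hH.str.symm.toLinearMap ∘ₗ hA.coact

theorem HomComodAlg.coactTwice_str (hA : HomComodAlg hH A) (a : A) :
    hA.coactTwice (hA.str a) =
      TensorProduct.map (TensorProduct.map hA.str.toLinearMap hH.str.toLinearMap)
        hH.str.toLinearMap (hA.coactTwice a) := by
  have map_coact_map_str (u : A ⊗[k] H) :
      TensorProduct.map hA.coact hH.str.symm.toLinearMap
          (TensorProduct.map hA.str.toLinearMap hH.str.toLinearMap u) =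
        TensorProduct.map (TensorProduct.map hA.str.toLinearMap hH.str.toLinearMap)
          hH.str.toLinearMap (TensorProduct.map hA.coact hH.str.symm.toLinearMap u) := by
    induction u using TensorProduct.induction_on with
    | zero => simp only [map_zero]
    | add u v hu hv => simp only [map_add, hu, hv]
    | tmul b h =>
      simp only [TensorProduct.map_tmul, LinearEquiv.coe_coe, hA.coact_str,
        LinearEquiv.symm_apply_apply, LinearEquiv.apply_symm_apply]
  simp only [coactTwice, LinearMap.comp_apply, hA.coact_str, map_coact_map_str]

/-- The diagonal right `A`-action `((m ⊗ d) ⊗ c) · a = (m · a₀₀ ⊗ d · a₀₁) ⊗ c · α⁻¹(a₁)`. -/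
noncomputable def diagAct (hA : HomComodAlg hH A) (hC : HomModCoalg hH C)
    (act : M →ₗ[k] A →ₗ[k] M) :
    (M ⊗[k] C) ⊗[k] C →ₗ[k] A →ₗ[k] (M ⊗[k] C) ⊗[k] C :=
  (TensorProduct.map₂ (TensorProduct.map₂ act hC.act) hC.act).compl₂ hA.coactTwice

/-- The map `(x ⊗ g) ⊗ h ↦ β²(x) θ(γ⁻¹(d) · g ⊗ γ⁻¹(c) · h)`, whose value at
`(a₀₀ ⊗ a₀₁) ⊗ α⁻¹(a₁)` is the left-hand side of (4.3). -/
noncomputable def twistedMul (hA : HomComodAlg hH A) (hC : HomModCoalg hH C)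
    (θ : C ⊗[k] C →ₗ[k] A) (d c : C) : (A ⊗[k] H) ⊗[k] H →ₗ[k] A :=
  TensorProduct.lift hA.mul ∘ₗ TensorProduct.map LinearMap.id θ ∘ₗ
    (TensorProduct.assoc k A C C).toLinearMap ∘ₗ
    TensorProduct.map
      (TensorProduct.map (hA.str.toLinearMap ∘ₗ hA.str.toLinearMap) (hC.act (hC.str.symm d)))
      (hC.act (hC.str.symm c))

/-- An `(A, β)`-integral without the colinearity (4.1) and the normalization (4.2): a map
`θ : C ⊗ C → A` that commutes with the structure maps and satisfies (4.3). -/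
structure IsTwistedLinear (hA : HomComodAlg hH A) (hC : HomModCoalg hH C)
    (θ : C ⊗[k] C →ₗ[k] A) : Prop where
  map_str : ∀ d c, θ (hC.str d ⊗ₜ[k] hC.str c) = hA.str (θ (d ⊗ₜ[k] c))
  twistedMul_coactTwice : ∀ d c a,
    twistedMul hA hC θ d c (hA.coactTwice a) = hA.mul (θ (d ⊗ₜ[k] c)) a

variable {hA : HomComodAlg hH A} {hC : HomModCoalg hH C}

theorem NIntegral.isTwistedLinear (θi : NIntegral hA hC) : IsTwistedLinear hA hC θi.θ where
  map_str := θi.θ_str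
  twistedMul_coactTwice d c a := θi.cond3 a c d

namespace DoiMod

/-- The second factor `(n ⊗ e) ⊗ c ↦ μ(n) · θ(e ⊗ c)` of `ν_M`. -/
noncomputable def actTheta (θ : C ⊗[k] C →ₗ[k] A) (dM : DoiMod hA hC M) :
    (M ⊗[k] C) ⊗[k] C →ₗ[k] M :=
  TensorProduct.lift dM.act ∘ₗ TensorProduct.map dM.str.toLinearMap θ ∘ₗ
    (TensorProduct.assoc k M C C).toLinearMap

variable {θ : C ⊗[k] C →ₗ[k] A} (dM : DoiMod hA hC M)

theorem actTheta_tmul (n : M) (e c : C) :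
    dM.actTheta θ ((n ⊗ₜ[k] e) ⊗ₜ[k] c) = dM.act (dM.str n) (θ (e ⊗ₜ[k] c)) :=
  rfl

theorem nuMap_eq_actTheta (x : M ⊗[k] C) :
    nuMap θ dM x = dM.actTheta θ (TensorProduct.map dM.coact hC.str.symm.toLinearMap x) :=
  rfl

theorem map_coact_congr_str (x : M ⊗[k] C) :
    TensorProduct.map dM.coact hC.str.symm.toLinearMap (TensorProduct.congr dM.str hC.str x) =
      TensorProduct.congr (TensorProduct.congr dM.str hC.str) hC.str
        (TensorProduct.map dM.coact hC.str.symm.toLinearMap x) := by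
  induction x using TensorProduct.induction_on with
  | zero => simp only [map_zero]
  | add x y hx hy => simp only [map_add, hx, hy]
  | tmul m c =>
    simp only [TensorProduct.congr_tmul, TensorProduct.map_tmul, LinearEquiv.coe_coe,
      dM.coact_str, LinearEquiv.symm_apply_apply, LinearEquiv.apply_symm_apply]
    rfl

theorem actTheta_congr_str
    (hθ : ∀ d c, θ (hC.str d ⊗ₜ[k] hC.str c) = hA.str (θ (d ⊗ₜ[k] c)))
    (t : (M ⊗[k] C) ⊗[k] C) :
    dM.actTheta θ (TensorProduct.congr (TensorProduct.congr dM.str hC.str) hC.str t) =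
      dM.str (dM.actTheta θ t) := by
  suffices h : dM.actTheta θ ∘ₗ
      (TensorProduct.congr (TensorProduct.congr dM.str hC.str) hC.str).toLinearMap =
        dM.str.toLinearMap ∘ₗ dM.actTheta θ from LinearMap.congr_fun h t
  refine TensorProduct.ext_threefold fun n e c ↦ ?_
  simp only [LinearMap.comp_apply, LinearEquiv.coe_coe, TensorProduct.congr_tmul,
    actTheta_tmul, hθ, dM.str_act]

theorem nuMap_congr_str
    (hθ : ∀ d c, θ (hC.str d ⊗ₜ[k] hC.str c) = hA.str (θ (d ⊗ₜ[k] c))) (x : M ⊗[k] C) :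
    nuMap θ dM (TensorProduct.congr dM.str hC.str x) = dM.str (nuMap θ dM x) := by
  simp only [nuMap_eq_actTheta, map_coact_congr_str, dM.actTheta_congr_str hθ]

theorem map_coact_Gact (x : M ⊗[k] C) (a : A) :
    TensorProduct.map dM.coact hC.str.symm.toLinearMap (Gact hA hC dM.act x a) =
      diagAct hA hC dM.act (TensorProduct.map dM.coact hC.str.symm.toLinearMap x) a := by
  suffices h : (TensorProduct.map₂ dM.act hC.act).compr₂
      (TensorProduct.map dM.coact hC.str.symm.toLinearMap) =
        (TensorProduct.map₂ (TensorProduct.map₂ dM.act hC.act) hC.act).compl₁₂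
          (TensorProduct.map dM.coact hC.str.symm.toLinearMap)
          (TensorProduct.map hA.coact hH.str.symm.toLinearMap) from
    LinearMap.congr_fun₂ h x (hA.coact a)
  refine TensorProduct.ext' fun m c ↦ TensorProduct.ext' fun b h ↦ ?_
  simp only [LinearMap.compr₂_apply, LinearMap.compl₁₂_apply, TensorProduct.map₂_apply_tmul,
    TensorProduct.map_tmul, LinearEquiv.coe_coe, dM.compat, hC.str_symm_act]

theorem actTheta_map₂_map_str
    (hθ : ∀ d c, θ (hC.str d ⊗ₜ[k] hC.str c) = hA.str (θ (d ⊗ₜ[k] c)))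
    (n : M) (e c : C) (w : (A ⊗[k] H) ⊗[k] H) :
    dM.actTheta θ
        (TensorProduct.map₂ (TensorProduct.map₂ dM.act hC.act) hC.act ((n ⊗ₜ[k] e) ⊗ₜ[k] c)
          (TensorProduct.map (TensorProduct.map hA.str.toLinearMap hH.str.toLinearMap)
            hH.str.toLinearMap w)) =
      dM.act (dM.str (dM.str n)) (twistedMul hA hC θ e c w) := by
  suffices h : dM.actTheta θ ∘ₗ
      TensorProduct.map₂ (TensorProduct.map₂ dM.act hC.act) hC.act ((n ⊗ₜ[k] e) ⊗ₜ[k] c) ∘ₗ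
        TensorProduct.map (TensorProduct.map hA.str.toLinearMap hH.str.toLinearMap)
          hH.str.toLinearMap =
      dM.act (dM.str (dM.str n)) ∘ₗ twistedMul hA hC θ e c from LinearMap.congr_fun h w
  refine TensorProduct.ext_threefold fun x g h ↦ ?_
  have theta_act_str : θ (hC.act e (hH.str g) ⊗ₜ[k] hC.act c (hH.str h)) =
      hA.str (θ (hC.act (hC.str.symm e) g ⊗ₜ[k] hC.act (hC.str.symm c) h)) := by
    simp only [← hθ, hC.str_act, LinearEquiv.apply_symm_apply]
  calc
    _ = dM.act (dM.str (dM.act n (hA.str x)))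
          (θ (hC.act e (hH.str g) ⊗ₜ[k] hC.act c (hH.str h))) := rfl
    _ = dM.act (dM.str (dM.str n)) (hA.mul (hA.str (hA.str x))
          (θ (hC.act (hC.str.symm e) g ⊗ₜ[k] hC.act (hC.str.symm c) h))) := by
      rw [theta_act_str, dM.str_act, dM.act_act]
    _ = _ := rfl

theorem actTheta_diagAct (hθ : IsTwistedLinear hA hC θ) (t : (M ⊗[k] C) ⊗[k] C) (a : A) :
    dM.actTheta θ (diagAct hA hC dM.act t a) = dM.act (dM.actTheta θ t) a := by
  suffices h : dM.actTheta θ ∘ₗ (diagAct hA hC dM.act).flip a =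
      dM.act.flip a ∘ₗ dM.actTheta θ from LinearMap.congr_fun h t
  refine TensorProduct.ext_threefold fun n e c ↦ ?_
  -- Hom-associativity `(m · x) · β(b) = μ(m) · (x b)` needs `a` in the form `β(b)`.
  obtain ⟨b, rfl⟩ := hA.str.surjective a
  calc
    _ = dM.actTheta θ
          (TensorProduct.map₂ (TensorProduct.map₂ dM.act hC.act) hC.act ((n ⊗ₜ[k] e) ⊗ₜ[k] c)
            (hA.coactTwice (hA.str b))) := rfl
    _ = dM.act (dM.str (dM.str n)) (twistedMul hA hC θ e c (hA.coactTwice b)) := by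
      rw [hA.coactTwice_str, dM.actTheta_map₂_map_str hθ.map_str]
    _ = dM.act (dM.str (dM.str n)) (hA.mul (θ (e ⊗ₜ[k] c)) b) := by
      rw [hθ.twistedMul_coactTwice]
    _ = dM.act (dM.act (dM.str n) (θ (e ⊗ₜ[k] c))) (hA.str b) := (dM.act_act _ _ _).symm

theorem nuMap_Gact (hθ : IsTwistedLinear hA hC θ) (x : M ⊗[k] C) (a : A) :
    nuMap θ dM (Gact hA hC dM.act x a) = dM.act (nuMap θ dM x) a := by
  simp only [nuMap_eq_actTheta, map_coact_Gact, dM.actTheta_diagAct hθ]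

end DoiMod

end DoiHomHopf

theorem nu_strComm_and_ALinear_general {k : Type*} [CommRing k] {H A C M : Type*}
    [AddCommGroup H] [Module k H] [AddCommGroup A] [Module k A]
    [AddCommGroup C] [Module k C] [AddCommGroup M] [Module k M]
    {hH : HomBialg k H} {hA : HomComodAlg hH A} {hC : HomModCoalg hH C}
    {θ : C ⊗[k] C →ₗ[k] A} (hθ : IsTwistedLinear hA hC θ) (dM : DoiMod hA hC M) :
    (∀ x : M ⊗[k] C,
      nuMap θ dM (TensorProduct.congr dM.str hC.str x) = dM.str (nuMap θ dM x)) ∧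
    (∀ (x : M ⊗[k] C) (a : A),
      nuMap θ dM (Gact hA hC dM.act x a) = dM.act (nuMap θ dM x) a) :=
  ⟨dM.nuMap_congr_str hθ.map_str, dM.nuMap_Gact hθ⟩

/-- For a normalized `(A, β)`-integral `θ` and a Doi Hom-Hopf module `(M, μ)`,
the map `ν_M(m ⊗ c) = μ(m₀) · θ(m₁ ⊗ γ⁻¹(c))` commutes with the structure maps and is
right `A`-linear. -/
theorem nu_strComm_and_ALinear {k : Type*} [CommRing k] {H A C M : Type*}
    [AddCommGroup H] [Module k H] [AddCommGroup A] [Module k A]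
    [AddCommGroup C] [Module k C] [AddCommGroup M] [Module k M]
    (hH : HomHopf k H) (hA : HomComodAlg hH.toHomBialg A) (hC : HomModCoalg hH.toHomBialg C)
    (θi : NIntegral hA hC) (dM : DoiMod hA hC M) :
    (∀ x : M ⊗[k] C,
      nuMap θi.θ dM (TensorProduct.congr dM.str hC.str x) = dM.str (nuMap θi.θ dM x)) ∧
    (∀ (x : M ⊗[k] C) (a : A),
      nuMap θi.θ dM (Gact hA hC dM.act x a) = dM.act (nuMap θi.θ dM x) a) :=
  nu_strComm_and_ALinear_general θi.isTwistedLinear dM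
end

section
/- Let (H, A, C) be a Doi Hom-Hopf datum, θ : C⊗C → A a normalized (A,β)-integral, and (M, μ) a Doi Hom-Hopf module. Define ν_M : M⊗C → M by ν_M(m⊗c) = μ(m₀)·θ(m₁⊗γ⁻¹(c)). Then ν_M is right C-colinear: ρ_M∘ν_M = (ν_M⊗id_C)∘ρ_{M⊗C}, where ρ_{M⊗C}(m⊗c) = (μ⁻¹(m)⊗c₁)⊗γ(c₂). -/
open TensorProduct

open DoiHomHopf

/-!
In Sweedler notation, compatibility of action and coaction followed by Hom-coassociativity gives,
for every linear `f : C → A`,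
`ρ(μ(m₀) · f(m₁)) = m₀ · f(γ(m₁)₂)₀ ⊗ γ(m₁)₁ · f(γ(m₁)₂)₁`.
For `f = θ(- ⊗ γ⁻¹(c))` the left side is `ρ(ν(m ⊗ c))`, and condition (4.1) at `d = γ(m₁)` turns
the right side into `m₀ · β⁻¹(θ(m₁ ⊗ c₁)) ⊗ γ(c₂)`. Since `ρ` and `θ` commute with the structure
maps, this is `ν(μ⁻¹(m) ⊗ c₁) ⊗ γ(c₂)`.
-/

namespace DoiHomHopf

variable {k : Type*} [CommRing k] {H A C M : Type*}
  [AddCommGroup H] [Module k H] [AddCommGroup A] [Module k A]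
  [AddCommGroup C] [Module k C] [AddCommGroup M] [Module k M]

theorem Gcoact_tmul (hC : HomCoalg k C) (str : M ≃ₗ[k] M) (m : M) (c : C) :
    Gcoact hC str (m ⊗ₜ[k] c) =
      TensorProduct.map (TensorProduct.mk k M C (str.symm m)) hC.str.toLinearMap (hC.comul c) := by
  simp only [Gcoact, LinearMap.comp_apply, LinearEquiv.coe_coe, TensorProduct.map_tmul]
  induction hC.comul c with
  | zero => simp
  | add x y hx hy => simp only [map_add, TensorProduct.tmul_add, hx, hy]
  | tmul u v => simp

theorem map_lift_assoc_comm_assoc_symm_tmul (f : A →ₗ[k] A) (act : C →ₗ[k] H →ₗ[k] C) (d : C)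
    (r : A ⊗[k] H) :
    TensorProduct.map f (TensorProduct.lift act)
        (TensorProduct.assoc k A C H
          (TensorProduct.map (TensorProduct.comm k C A).toLinearMap LinearMap.id
            ((TensorProduct.assoc k C A H).symm (d ⊗ₜ[k] r)))) =
      LinearMap.rTensor C f (LinearMap.lTensor A (act d) r) := by
  induction r with
  | zero => simp
  | add x y hx hy => simp only [map_add, TensorProduct.tmul_add, hx, hy]
  | tmul a h => simp

variable {hH : HomBialg k H} {hA : HomComodAlg hH A} {hC : HomModCoalg hH C}

section Datum

variable (hA hC)

/-- The entwining map `C ⊗ A → A ⊗ C`, `d ⊗ a ↦ a₀ ⊗ d · a₁`, of the datum `(H, A, C)`, in curried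
form. -/
noncomputable def entwine : C →ₗ[k] A →ₗ[k] A ⊗[k] C :=
  (LinearMap.lTensorHom A ∘ₗ hC.act).compl₂ hA.coact

theorem entwine_apply (d : C) (a : A) :
    entwine hA hC d a = LinearMap.lTensor A (hC.act d) (hA.coact a) :=
  rfl

/-- The map `C → A ⊗ C`, `d ↦ f(d₂)₀ ⊗ d₁ · f(d₂)₁`, which entwines `d₁` with `f(d₂)`. It expresses
condition (4.1), and also the coaction of a Doi Hom-Hopf module on elements `μ(m₀) · f(m₁)`. -/
noncomputable def entwineComul (f : C →ₗ[k] A) : C →ₗ[k] A ⊗[k] C :=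
  TensorProduct.lift ((entwine hA hC).compl₂ f) ∘ₗ hC.comul

/-- The colinearity part of the notion of `(A, β)`-integral: a map `θ : C ⊗ C → A` commuting with
the structure maps and satisfying (4.1), which is expressed through `entwineComul`. -/
structure IsHomIntegral (θ : C ⊗[k] C →ₗ[k] A) : Prop where
  map_str : ∀ c d, θ (hC.str c ⊗ₜ[k] hC.str d) = hA.str (θ (c ⊗ₜ[k] d))
  str_entwineComul : ∀ c d,
    LinearMap.rTensor C hA.str.toLinearMap
        (entwineComul hA hC ((TensorProduct.curry θ).flip (hC.str.symm c)) d) =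
      TensorProduct.map (TensorProduct.curry θ (hC.str.symm d)) hC.str.toLinearMap (hC.comul c)

end Datum

theorem NIntegral.isHomIntegral (θi : NIntegral hA hC) : IsHomIntegral hA hC θi.θ where
  map_str := θi.θ_str
  str_entwineComul c d := by
    rw [θi.cond1, entwineComul, LinearMap.comp_apply]
    induction hC.comul d with
    | zero => simp
    | add x y hx hy => simp only [map_add, hx, hy]
    | tmul d₁ d₂ =>
      rw [TensorProduct.map_tmul, map_lift_assoc_comm_assoc_symm_tmul, TensorProduct.lift.tmul,
        LinearMap.compl₂_apply, entwine_apply, LinearMap.id_apply, LinearMap.comp_apply]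

namespace IsHomIntegral

variable {θ : C ⊗[k] C →ₗ[k] A}

theorem map_str_symm (hθ : IsHomIntegral hA hC θ) (c d : C) :
    θ (hC.str.symm c ⊗ₜ[k] hC.str.symm d) = hA.str.symm (θ (c ⊗ₜ[k] d)) := by
  rw [LinearEquiv.eq_symm_apply, ← hθ.map_str, LinearEquiv.apply_symm_apply,
    LinearEquiv.apply_symm_apply]

theorem entwineComul_str (hθ : IsHomIntegral hA hC θ) (c d : C) :
    entwineComul hA hC ((TensorProduct.curry θ).flip (hC.str.symm c)) (hC.str d) =
      TensorProduct.map (TensorProduct.curry (hA.str.symm.toLinearMap ∘ₗ θ) d)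
        hC.str.toLinearMap (hC.comul c) := by
  apply (LinearEquiv.rTensor C hA.str).injective
  have h := hθ.str_entwineComul c (hC.str d)
  rw [LinearEquiv.symm_apply_apply] at h
  change LinearMap.rTensor C hA.str.toLinearMap _ = LinearMap.rTensor C hA.str.toLinearMap _
  rw [h, LinearMap.rTensor_map]
  congr 2
  ext u
  simp

end IsHomIntegral

namespace DoiMod

variable (dM : DoiMod hA hC M)

theorem coact_str_symm (m : M) :
    dM.coact (dM.str.symm m) =
      TensorProduct.map dM.str.symm.toLinearMap hC.str.symm.toLinearMap (dM.coact m) := by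
  obtain ⟨n, rfl⟩ := dM.str.surjective m
  rw [LinearEquiv.symm_apply_apply, dM.coact_str, TensorProduct.map_map]
  simp

/-- The map `M ⊗ (A ⊗ C) → M ⊗ C`, `m ⊗ (a ⊗ c) ↦ m · a ⊗ c`, in curried form. -/
noncomputable def tensorAct : M →ₗ[k] A ⊗[k] C →ₗ[k] M ⊗[k] C :=
  LinearMap.rTensorHom C ∘ₗ dM.act

theorem tensorAct_apply (m : M) : dM.tensorAct m = LinearMap.rTensor C (dM.act m) :=
  rfl

theorem coact_act (m : M) (a : A) :
    dM.coact (dM.act m a) =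
      TensorProduct.lift dM.tensorAct
        (LinearMap.lTensor M ((entwine hA hC).flip a) (dM.coact m)) := by
  rw [dM.compat]
  induction dM.coact m with
  | zero => simp
  | add x y hx hy => simp only [map_add, LinearMap.add_apply, hx, hy]
  | tmul n d =>
    rw [LinearMap.lTensor_tmul, TensorProduct.lift.tmul, tensorAct_apply, LinearMap.flip_apply,
      entwine_apply, LinearMap.rTensor, LinearMap.lTensor, TensorProduct.map_map]
    rfl

/-- The endomorphism `m ↦ μ(m₀) · f(m₁)` of `M` attached to a linear map `f : C → A`; the map `ν_M`
is the case `f = θ(- ⊗ γ⁻¹(c))`. -/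
noncomputable def convAct (f : C →ₗ[k] A) : M →ₗ[k] M :=
  TensorProduct.lift dM.act ∘ₗ TensorProduct.map dM.str.toLinearMap f ∘ₗ dM.coact

theorem coact_lift_act_map_str (f : C →ₗ[k] A) (t : M ⊗[k] C) :
    dM.coact (TensorProduct.lift dM.act (TensorProduct.map dM.str.toLinearMap f t)) =
      TensorProduct.lift dM.tensorAct
        (TensorProduct.map dM.str.toLinearMap
          (TensorProduct.lift ((entwine hA hC).compl₂ f) ∘ₗ
            TensorProduct.map hC.str.toLinearMap hC.str.toLinearMap)
          (TensorProduct.assoc k M C C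
            (TensorProduct.map dM.coact hC.str.symm.toLinearMap t))) := by
  induction t with
  | zero => simp
  | add x y hx hy => simp only [map_add, hx, hy]
  | tmul m c =>
    rw [TensorProduct.map_tmul, TensorProduct.lift.tmul, coact_act, LinearEquiv.coe_coe,
      dM.coact_str, TensorProduct.map_tmul]
    induction dM.coact m with
    | zero => simp
    | add x y hx hy => simp only [map_add, TensorProduct.add_tmul, hx, hy]
    | tmul n d => simp

theorem coact_convAct (f : C →ₗ[k] A) (m : M) :
    dM.coact (dM.convAct f m) =
      TensorProduct.lift dM.tensorAct
        (LinearMap.lTensor M (entwineComul hA hC f ∘ₗ hC.str.toLinearMap) (dM.coact m)) := by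
  have comul_comp_str : TensorProduct.map hC.str.toLinearMap hC.str.toLinearMap ∘ₗ hC.comul =
      hC.comul ∘ₗ hC.str.toLinearMap :=
    LinearMap.ext fun c => (hC.comul_str c).symm
  rw [convAct, LinearMap.comp_apply, LinearMap.comp_apply, coact_lift_act_map_str, dM.hom_coassoc,
    TensorProduct.map_map, LinearMap.comp_assoc, comul_comp_str, ← LinearMap.comp_assoc]
  simp [entwineComul, LinearMap.lTensor]

/-- The map `M ⊗ C → Hom(C, M)`, `m ⊗ d ↦ (c ↦ m · φ(d ⊗ c))`, attached to `φ : C ⊗ C → A`. -/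
noncomputable def pairAct (φ : C ⊗[k] C →ₗ[k] A) : M ⊗[k] C →ₗ[k] C →ₗ[k] M :=
  TensorProduct.curry
    (TensorProduct.lift dM.act ∘ₗ LinearMap.lTensor M φ ∘ₗ
      (TensorProduct.assoc k M C C).toLinearMap)

theorem pairAct_tmul (φ : C ⊗[k] C →ₗ[k] A) (m : M) (d : C) :
    dM.pairAct φ (m ⊗ₜ[k] d) = dM.act m ∘ₗ TensorProduct.curry φ d := by
  ext c
  simp [pairAct]

theorem lift_tensorAct_lTensor (φ : C ⊗[k] C →ₗ[k] A) (g : C →ₗ[k] C) (w : C ⊗[k] C)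
    {F : C →ₗ[k] A ⊗[k] C} (hF : ∀ d, F d = TensorProduct.map (TensorProduct.curry φ d) g w)
    (t : M ⊗[k] C) :
    TensorProduct.lift dM.tensorAct (LinearMap.lTensor M F t) =
      TensorProduct.map (dM.pairAct φ t) g w := by
  induction t with
  | zero => simp
  | add x y hx hy => simp only [map_add, TensorProduct.map_add_left, LinearMap.add_apply, hx, hy]
  | tmul m d =>
    rw [LinearMap.lTensor_tmul, TensorProduct.lift.tmul, tensorAct_apply, hF,
      LinearMap.rTensor_map, pairAct_tmul]

end DoiMod

section nuMap

variable {θ : C ⊗[k] C →ₗ[k] A} (dM : DoiMod hA hC M)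

theorem nuMap_tmul (m : M) (c : C) :
    nuMap θ dM (m ⊗ₜ[k] c) =
      dM.convAct ((TensorProduct.curry θ).flip (hC.str.symm c)) m := by
  simp only [nuMap, DoiMod.convAct, LinearMap.comp_apply, TensorProduct.map_tmul]
  induction dM.coact m with
  | zero => simp
  | add x y hx hy => simp only [map_add, TensorProduct.add_tmul, hx, hy]
  | tmul n d => simp

theorem nuMap_comp_mk_str_symm (hθ : IsHomIntegral hA hC θ) (m : M) :
    nuMap θ dM ∘ₗ TensorProduct.mk k M C (dM.str.symm m) =
      dM.pairAct (hA.str.symm.toLinearMap ∘ₗ θ) (dM.coact m) := by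
  ext c
  rw [LinearMap.comp_apply, TensorProduct.mk_apply, nuMap_tmul, DoiMod.convAct,
    LinearMap.comp_apply, LinearMap.comp_apply, dM.coact_str_symm]
  induction dM.coact m with
  | zero => simp
  | add x y hx hy => simp only [map_add, LinearMap.add_apply, hx, hy]
  | tmul n d => simp [DoiMod.pairAct_tmul, hθ.map_str_symm]

end nuMap

end DoiHomHopf

theorem nu_CColinear_general {k : Type*} [CommRing k] {H A C M : Type*}
    [AddCommGroup H] [Module k H] [AddCommGroup A] [Module k A]
    [AddCommGroup C] [Module k C] [AddCommGroup M] [Module k M]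
    {hH : HomBialg k H} {hA : HomComodAlg hH A} {hC : HomModCoalg hH C}
    {θ : C ⊗[k] C →ₗ[k] A} (hθ : IsHomIntegral hA hC θ) (dM : DoiMod hA hC M) (x : M ⊗[k] C) :
    dM.coact (nuMap θ dM x) =
      TensorProduct.map (nuMap θ dM) LinearMap.id (Gcoact hC.toHomCoalg dM.str x) := by
  induction x with
  | zero => simp
  | add x y hx hy => simp only [map_add, hx, hy]
  | tmul m c =>
    let θ' := hA.str.symm.toLinearMap ∘ₗ θ
    calc dM.coact (nuMap θ dM (m ⊗ₜ[k] c))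
      _ = TensorProduct.lift dM.tensorAct (LinearMap.lTensor M
            (entwineComul hA hC ((TensorProduct.curry θ).flip (hC.str.symm c)) ∘ₗ
              hC.str.toLinearMap) (dM.coact m)) := by
        rw [nuMap_tmul, dM.coact_convAct]
      _ = TensorProduct.map (dM.pairAct θ' (dM.coact m)) hC.str.toLinearMap (hC.comul c) :=
        dM.lift_tensorAct_lTensor θ' _ _ (hθ.entwineComul_str c) _
      _ = TensorProduct.map (nuMap θ dM) LinearMap.id
            (Gcoact hC.toHomCoalg dM.str (m ⊗ₜ[k] c)) := by
        rw [Gcoact_tmul, TensorProduct.map_map, nuMap_comp_mk_str_symm dM hθ, LinearMap.id_comp]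

/-- For a normalized `(A, β)`-integral `θ` and a Doi Hom-Hopf module `(M, μ)`,
`ν_M(m ⊗ c) = μ(m₀) · θ(m₁ ⊗ γ⁻¹(c))` is right `C`-colinear. -/
theorem nu_CColinear {k : Type*} [CommRing k] {H A C M : Type*}
    [AddCommGroup H] [Module k H] [AddCommGroup A] [Module k A]
    [AddCommGroup C] [Module k C] [AddCommGroup M] [Module k M]
    (hH : HomHopf k H) (hA : HomComodAlg hH.toHomBialg A) (hC : HomModCoalg hH.toHomBialg C)
    (θi : NIntegral hA hC) (dM : DoiMod hA hC M) :
    ∀ x : M ⊗[k] C,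
      dM.coact (nuMap θi.θ dM x) =
        TensorProduct.map (nuMap θi.θ dM) LinearMap.id (Gcoact hC.toHomCoalg dM.str x) :=
  nu_CColinear_general θi.isHomIntegral dM
end

section
/- Let (H, A, C) be a Doi Hom-Hopf datum, θ : C⊗C → A a normalized (A,β)-integral, and (M, μ) a Doi Hom-Hopf module with coaction ρ_M(m) = m₀⊗m₁. Define ν_M : M⊗C → M by ν_M(m⊗c) = μ(m₀)·θ(m₁⊗γ⁻¹(c)). Then ν_M is a retraction of the coaction: ν_M(m₀⊗m₁) = m for all m ∈ M. -/
open TensorProduct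

open DoiHomHopf

/-! Hom-coassociativity of the coaction cancels the `μ` in `ν_M` and brings the two `C`-components
together into a comultiplication, to which the normalization `(4.2)` of `θ` applies:
`ν_M(m₀ ⊗ m₁) = μ(m₀₀) · θ(m₀₁ ⊗ γ⁻¹(m₁)) = m₀ · θ(Δ(m₁)) = m₀ · ε(m₁)1 = μ(ε(m₁)m₀) = m`. -/

namespace DoiHomHopf

variable {k : Type*} [CommRing k] {H A C M : Type*}
  [AddCommGroup H] [Module k H] [AddCommGroup A] [Module k A]
  [AddCommGroup C] [Module k C] [AddCommGroup M] [Module k M]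

theorem HomMod.lift_act_comp_lTensor_counit_smulRight_one {hA : HomAlg k A} (hM : HomMod hA M)
    (hC : HomCoalg k C) :
    TensorProduct.lift hM.act ∘ₗ (hC.counit.smulRight hA.one).lTensor M = deltaMap hC hM.str := by
  ext m c
  simp [deltaMap, hM.act_one]

namespace HomComod

variable {hC : HomCoalg k C} (hM : HomComod hC M)

theorem deltaMap_coact (m : M) : deltaMap hC hM.str (hM.coact m) = m :=
  (congrArg hM.str (hM.counit_coact m)).trans (hM.str.apply_symm_apply m)

theorem map_str_assoc_map_coact_coact {N : Type*} [AddCommGroup N] [Module k N]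
    (f : C ⊗[k] C →ₗ[k] N) (m : M) :
    TensorProduct.map hM.str.toLinearMap f
        (TensorProduct.assoc k M C C
          (TensorProduct.map hM.coact hC.str.symm.toLinearMap (hM.coact m))) =
      (f ∘ₗ hC.comul).lTensor M (hM.coact m) := by
  have str_comp_symm : hM.str.toLinearMap ∘ₗ hM.str.symm.toLinearMap = LinearMap.id :=
    hM.str.comp_symm
  rw [hM.hom_coassoc, ← LinearMap.comp_apply, ← TensorProduct.map_comp, str_comp_symm]
  rfl

end HomComod

namespace DoiMod

variable {hH : HomBialg k H} {hA : HomComodAlg hH A} {hC : HomModCoalg hH C}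

/-- The Hom-module underlying a Doi Hom-Hopf module. -/
def toHomMod (dM : DoiMod hA hC M) : HomMod hA.toHomAlg M where
  str := dM.str
  act := dM.act
  act_act := dM.act_act
  act_one := dM.act_one
  str_act := dM.str_act

/-- The Hom-comodule underlying a Doi Hom-Hopf module, with the same structure map as
`DoiMod.toHomMod`. -/
def toHomComod (dM : DoiMod hA hC M) : HomComod hC.toHomCoalg M where
  str := dM.str
  coact := dM.coact
  hom_coassoc := dM.hom_coassoc
  counit_coact := dM.counit_coact
  coact_str := dM.coact_str

theorem nuMap_coact (dM : DoiMod hA hC M) (θ : C ⊗[k] C →ₗ[k] A) (m : M) :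
    nuMap θ dM (dM.coact m) =
      TensorProduct.lift dM.act ((θ ∘ₗ hC.comul).lTensor M (dM.coact m)) :=
  congrArg (TensorProduct.lift dM.act) (dM.toHomComod.map_str_assoc_map_coact_coact θ m)

end DoiMod

end DoiHomHopf

theorem nu_retracts_coaction_general {k : Type*} [CommRing k] {H A C M : Type*}
    [AddCommGroup H] [Module k H] [AddCommGroup A] [Module k A]
    [AddCommGroup C] [Module k C] [AddCommGroup M] [Module k M]
    {hH : HomBialg k H} {hA : HomComodAlg hH A} {hC : HomModCoalg hH C}
    (θ : C ⊗[k] C →ₗ[k] A) (hθ : ∀ c, θ (hC.comul c) = hC.counit c • hA.one)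
    (dM : DoiMod hA hC M) (m : M) :
    nuMap θ dM (dM.coact m) = m := by
  have θ_comp_comul : θ ∘ₗ hC.comul = hC.counit.smulRight hA.one := LinearMap.ext hθ
  calc nuMap θ dM (dM.coact m)
      = TensorProduct.lift dM.act ((θ ∘ₗ hC.comul).lTensor M (dM.coact m)) := dM.nuMap_coact θ m
    _ = TensorProduct.lift dM.act ((hC.counit.smulRight hA.one).lTensor M (dM.coact m)) := by
        rw [θ_comp_comul]
    _ = deltaMap hC.toHomCoalg dM.str (dM.coact m) :=
        LinearMap.congr_fun
          (dM.toHomMod.lift_act_comp_lTensor_counit_smulRight_one hC.toHomCoalg) (dM.coact m)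
    _ = m := dM.toHomComod.deltaMap_coact m

/-- For a normalized `(A, β)`-integral `θ` and a Doi Hom-Hopf module `(M, μ)`,
`ν_M` is a retraction of the coaction: `ν_M(m₀ ⊗ m₁) = m`. -/
theorem nu_retracts_coaction {k : Type*} [CommRing k] {H A C M : Type*}
    [AddCommGroup H] [Module k H] [AddCommGroup A] [Module k A]
    [AddCommGroup C] [Module k C] [AddCommGroup M] [Module k M]
    (hH : HomHopf k H) (hA : HomComodAlg hH.toHomBialg A) (hC : HomModCoalg hH.toHomBialg C)
    (θi : NIntegral hA hC) (dM : DoiMod hA hC M) :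
    ∀ m : M, nuMap θi.θ dM (dM.coact m) = m :=
  nu_retracts_coaction_general θi.θ θi.cond2 dM
end
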